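/- arXiv:2002.00025 — 7 statements merged into one kernel-verified Lean document; each statement's English description precedes it below -/
import Mathlib

section
/- Let 0 ≤ a_h < √2 and a_r ≥ 0. Suppose C ≥ 0 satisfies the GRU mean-field fixed-point equation C = ∫ tanh(a_h·√(C·R(C))·x)² dγ(x), where R(C) = ∫ σ(a_r·√C·x)² dγ(x) and γ is the standard Gaussian measure on ℝ. Then C = 0. -/
/-! The claim follows from two bounds. Since `σ(t) + σ(-t) = 1` with both terms nonnegative,
`σ(t)² + σ(-t)² ≤ 1`, so the symmetry of the Gaussian gives `R ≤ 1/2`. Since `tanh(t)² ≤ t²`, the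
fixed-point equation gives `C ≤ a_h² C R ≤ (a_h² / 2) C`, and `a_h² / 2 < 1` leaves only `C = 0`. -/

open MeasureTheory ProbabilityTheory

/-- The derivative of `t cosh t - sinh t` is `t sinh t ≥ 0`. -/
lemma sinh_le_mul_cosh {t : ℝ} (ht : 0 ≤ t) : Real.sinh t ≤ t * Real.cosh t := by
  have hd : ∀ x : ℝ, HasDerivAt (fun x => x * Real.cosh x - Real.sinh x) (x * Real.sinh x) x := by
    intro x
    have h := ((hasDerivAt_id x).mul (Real.hasDerivAt_cosh x)).sub (Real.hasDerivAt_sinh x)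
    exact h.congr_deriv (by simp only [id_eq]; ring)
  have hm : MonotoneOn (fun x => x * Real.cosh x - Real.sinh x) (Set.Ici 0) := by
    apply monotoneOn_of_deriv_nonneg (convex_Ici 0)
    · exact fun x _ => (hd x).continuousAt.continuousWithinAt
    · exact fun x _ => (hd x).differentiableAt.differentiableWithinAt
    · intro x hx
      rw [interior_Ici] at hx
      rw [(hd x).deriv]
      exact mul_nonneg hx.le (Real.sinh_nonneg_iff.2 hx.le)
  have := hm Set.self_mem_Ici ht ht
  simp at this
  linarith

lemma tanh_sq_le_sq (t : ℝ) : Real.tanh t ^ 2 ≤ t ^ 2 := by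
  have key : ∀ s : ℝ, 0 ≤ s → Real.tanh s ^ 2 ≤ s ^ 2 := by
    intro s hs
    rw [Real.tanh_eq_sinh_div_cosh]
    have hc := Real.cosh_pos s
    have h0 : 0 ≤ Real.sinh s / Real.cosh s := div_nonneg (Real.sinh_nonneg_iff.2 hs) hc.le
    have h1 : Real.sinh s / Real.cosh s ≤ s := (div_le_iff₀ hc).2 (sinh_le_mul_cosh hs)
    gcongr
  rcases le_total 0 t with h | h
  · exact key t h
  · have := key (-t) (by linarith)
    simpa using this

lemma integrable_sq_gaussian : Integrable (fun x : ℝ => x ^ 2) (gaussianReal 0 1) :=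
  (memLp_id_gaussianReal 2).integrable_sq

lemma integral_sq_gaussian : ∫ x : ℝ, x ^ 2 ∂(gaussianReal 0 1) = 1 := by
  have h := variance_fun_id_gaussianReal (μ := 0) (v := 1)
  rw [variance_eq_integral (by fun_prop)] at h
  simpa using h

/-- A nonnegative continuous `g` with `g(x) + g(-x) = 1` has Gaussian second moment at most
`1/2`. -/
lemma integral_sq_le_half {g : ℝ → ℝ} (hg : Continuous g) (h0 : ∀ x, 0 ≤ g x)
    (h1 : ∀ x, g x + g (-x) = 1) : ∫ x, g x ^ 2 ∂(gaussianReal 0 1) ≤ 1 / 2 := by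
  have hi : ∀ f : ℝ → ℝ, Continuous f → (∀ x, 0 ≤ f x) → (∀ x, f x ≤ 1) →
      Integrable (fun x => f x ^ 2) (gaussianReal 0 1) := by
    intro f hf hf0 hf1
    refine Integrable.of_bound (hf.pow 2).aestronglyMeasurable 1 (.of_forall fun x => ?_)
    rw [Real.norm_of_nonneg (sq_nonneg _)]
    exact pow_le_one₀ (hf0 x) (hf1 x)
  have hle : ∀ x, g x ≤ 1 := fun x => by linarith [h1 x, h0 (-x)]
  have hs : ∫ x, g (-x) ^ 2 ∂(gaussianReal 0 1) = ∫ x, g x ^ 2 ∂(gaussianReal 0 1) := by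
    have hmap : (gaussianReal 0 1).map (fun x => -x) = gaussianReal 0 1 := by
      simpa using gaussianReal_map_neg (μ := 0) (v := 1)
    conv_rhs => rw [← hmap]
    exact (integral_map (f := fun x => g x ^ 2) measurable_neg.aemeasurable
      (hg.pow 2).aestronglyMeasurable).symm
  have hsum : ∫ x, (g x ^ 2 + g (-x) ^ 2) ∂(gaussianReal 0 1) ≤
      ∫ _, (1 : ℝ) ∂(gaussianReal 0 1) := by
    refine integral_mono ((hi g hg h0 hle).add
      (hi (fun x => g (-x)) (by fun_prop) (fun x => h0 _) (fun x => hle _))) (integrable_const _) ?_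
    intro x
    have := h1 x
    show g x ^ 2 + g (-x) ^ 2 ≤ 1
    nlinarith [mul_nonneg (h0 x) (h0 (-x))]
  rw [integral_add (hi g hg h0 hle)
    (hi (fun x => g (-x)) (by fun_prop) (fun x => h0 _) (fun x => hle _)), hs] at hsum
  simp at hsum
  linarith

/-- For `a_h < √2` the GRU mean-field fixed-point equation (zero biases) has only
the trivial solution `C = 0`. -/
theorem gru_no_nonzero_fixed_point_of_ah_lt_sqrt_two
    (a_h a_r : ℝ) (hah0 : 0 ≤ a_h) (hah : a_h < Real.sqrt 2) (har : 0 ≤ a_r)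
    (σ : ℝ → ℝ) (hσ : ∀ x, σ x = 1 / (1 + Real.exp (-x)))
    (C R : ℝ) (hC : 0 ≤ C)
    (hR : R = ∫ x, (σ (a_r * Real.sqrt C * x)) ^ 2 ∂(gaussianReal 0 1))
    (hfix : C = ∫ x, (Real.tanh (a_h * Real.sqrt (C * R) * x)) ^ 2 ∂(gaussianReal 0 1)) :
    C = 0 := by
  have hR0 : 0 ≤ R := hR ▸ integral_nonneg fun x => sq_nonneg _
  have hσc : Continuous σ := by
    rw [funext hσ]
    exact continuous_const.div (by fun_prop) fun x => by positivity
  have hσ1 : ∀ x, σ x + σ (-x) = 1 := by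
    intro x
    rw [hσ, hσ, neg_neg, Real.exp_neg]
    have := Real.exp_pos x
    field_simp
    ring
  have hR1 : R ≤ 1 / 2 := by
    rw [hR]
    refine integral_sq_le_half (g := fun x => σ (a_r * Real.sqrt C * x)) (by fun_prop)
      (fun x => ?_) (fun x => ?_)
    · simp only [hσ]
      positivity
    · simp only [mul_neg]
      exact hσ1 _
  have hle : C ≤ a_h ^ 2 * (C * R) := by
    calc C = _ := hfix
      _ ≤ ∫ x, (a_h ^ 2 * (C * R)) * x ^ 2 ∂(gaussianReal 0 1) := by
        refine integral_mono_of_nonneg (.of_forall fun x => sq_nonneg _)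
          (integrable_sq_gaussian.const_mul _) (.of_forall fun x => ?_)
        refine (tanh_sq_le_sq _).trans_eq ?_
        rw [mul_pow, mul_pow, Real.sq_sqrt (mul_nonneg hC hR0)]
      _ = a_h ^ 2 * (C * R) := by
        rw [integral_const_mul, integral_sq_gaussian, mul_one]
  have ha : a_h ^ 2 < 2 := (Real.lt_sqrt hah0).1 hah
  have h2 : a_h ^ 2 * (C * R) ≤ a_h ^ 2 * (C * (1 / 2)) := by gcongr
  nlinarith
end

section
/- Let κ ∈ [0,1) and let C_z0, C_h0, C_h1, C_φ0 be real numbers satisfying κ² ≤ C_z0, C_h1 ≤ C_h0, and the steady-state dynamical mean-field equation (1 + C_z0)·C_h0 − 2κ·C_h1 = (1 − 2κ + C_z0)·C_φ0. Then C_h0 ≤ C_φ0. -/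
/-- The equal-time autocorrelation bound of the GRU steady-state DMFT: if
`κ ∈ [0,1)`, `κ² ≤ C_z0`, `C_h1 ≤ C_h0` and
`(1 + C_z0) C_h0 - 2κ C_h1 = (1 - 2κ + C_z0) C_φ0`, then `C_h0 ≤ C_φ0`. -/
theorem gru_dmft_autocorrelation_bound
    (κ Cz0 Ch0 Ch1 Cφ0 : ℝ)
    (hκ : κ ∈ Set.Ico (0 : ℝ) 1)
    (hz : κ ^ 2 ≤ Cz0)
    (hh : Ch1 ≤ Ch0)
    (heq : (1 + Cz0) * Ch0 - 2 * κ * Ch1 = (1 - 2 * κ + Cz0) * Cφ0) :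
    Ch0 ≤ Cφ0 := by
  obtain ⟨h0, h1⟩ := hκ
  -- Jensen's bound gives `1 - 2κ + Cz0 ≥ (1 - κ)² > 0`.
  have hpos : 0 < 1 - 2 * κ + Cz0 := by nlinarith [pow_pos (sub_pos.2 h1) 2]
  refine le_of_mul_le_mul_left ?_ hpos
  -- The two sides differ by `2κ (Ch0 - Ch1)`.
  linarith [mul_nonneg h0 (sub_nonneg.2 hh)]
end

section
/- Let s > 0 and let σ'(x) = σ(x)(1 − σ(x)) be the derivative of the logistic sigmoid σ(x) = 1/(1+e^{-x}). Then lim_{a→∞} a · ∫ (σ'(a·s·x))² dγ(x) = 1/(6·s·√(2π)), where γ is the standard Gaussian measure on ℝ. -/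
open MeasureTheory ProbabilityTheory Filter

/-!
Substituting `y = a s x` turns `a · ∫ σ'(a s x)² φ(x) dx`, with `φ` the standard Gaussian density,
into `s⁻¹ · ∫ σ'(y)² φ(y / (a s)) dy`. Since `φ ≤ φ(0)` and `σ'²` is integrable, dominated
convergence gives the limit `s⁻¹ · φ(0) · ∫ σ'²`, where `φ(0) = 1 / √(2π)`. Finally
`σ'² = (σ - σ²) σ'` is the derivative of `σ² / 2 - σ³ / 3`, which increases from `0` to `1 / 6`;
this yields both the integrability of `σ'²` and `∫ σ'² = 1 / 6`.
-/

lemma hasDerivAt_sigmoid_primitive (x : ℝ) :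
    HasDerivAt (fun x => Real.sigmoid x ^ 2 / 2 - Real.sigmoid x ^ 3 / 3)
      ((Real.sigmoid x * (1 - Real.sigmoid x)) ^ 2) x := by
  have h := Real.hasDerivAt_sigmoid x
  refine (((h.pow 2).div_const 2).sub ((h.pow 3).div_const 3)).congr_deriv ?_
  norm_num
  ring

lemma tendsto_sigmoid_primitive_atTop :
    Tendsto (fun x => Real.sigmoid x ^ 2 / 2 - Real.sigmoid x ^ 3 / 3) atTop (nhds (1 / 6)) := by
  have h := Real.tendsto_sigmoid_atTop
  convert ((h.pow 2).div_const 2).sub ((h.pow 3).div_const 3) using 2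
  norm_num

lemma tendsto_sigmoid_primitive_atBot :
    Tendsto (fun x => Real.sigmoid x ^ 2 / 2 - Real.sigmoid x ^ 3 / 3) atBot (nhds 0) := by
  have h := Real.tendsto_sigmoid_atBot
  convert ((h.pow 2).div_const 2).sub ((h.pow 3).div_const 3) using 2
  norm_num

/-- The function is nonnegative, so its integrals over `[-n, n]` are increments of the bounded
primitive, and integrability follows from their convergence. -/
lemma integrable_sigmoid_deriv_sq :
    Integrable (fun x => (Real.sigmoid x * (1 - Real.sigmoid x)) ^ 2) := by
  have hc : Continuous (fun x => (Real.sigmoid x * (1 - Real.sigmoid x)) ^ 2) := by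
    have := continuous_sigmoid
    fun_prop
  refine integrable_of_intervalIntegral_norm_tendsto (1 / 6 - 0) (l := atTop) (a := fun x : ℝ => -x)
    (b := id) (fun i => (hc.integrableOn_Icc).mono_set Set.Ioc_subset_Icc_self)
    tendsto_neg_atTop_atBot tendsto_id ?_
  refine ((tendsto_sigmoid_primitive_atTop).sub
    (tendsto_sigmoid_primitive_atBot.comp tendsto_neg_atTop_atBot)).congr fun x => ?_
  simp_rw [Real.norm_of_nonneg (sq_nonneg _)]
  rw [intervalIntegral.integral_eq_sub_of_hasDerivAt (fun y _ => hasDerivAt_sigmoid_primitive y)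
    (hc.intervalIntegrable _ _)]
  rfl

lemma integral_sigmoid_deriv_sq :
    ∫ x, (Real.sigmoid x * (1 - Real.sigmoid x)) ^ 2 = 1 / 6 := by
  rw [integral_of_hasDerivAt_of_tendsto hasDerivAt_sigmoid_primitive integrable_sigmoid_deriv_sq
    tendsto_sigmoid_primitive_atBot tendsto_sigmoid_primitive_atTop, sub_zero]

/-- Concentration at the origin: as `a → ∞`, the rescaled functions `x ↦ a * g (a * s * x)`
act on the Gaussian density like a point mass at `0`. -/
lemma tendsto_mul_integral_comp_mul_gaussianReal {g : ℝ → ℝ} (hg : Integrable g)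
    {s : ℝ} (hs : 0 < s) :
    Tendsto (fun a : ℝ => a * ∫ x, g (a * s * x) ∂(gaussianReal 0 1)) atTop
      (nhds (s⁻¹ * ∫ y, gaussianPDFReal 0 1 0 * g y)) := by
  have hcont : Continuous (gaussianPDFReal 0 1) := by
    rw [gaussianPDFReal_def]
    fun_prop
  have hle : ∀ x, gaussianPDFReal 0 1 x ≤ gaussianPDFReal 0 1 0 := by
    intro x
    simp only [gaussianPDFReal]
    refine mul_le_mul_of_nonneg_left (Real.exp_le_exp.2 ?_) (by positivity)
    simp only [sub_zero, NNReal.coe_one]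
    nlinarith [sq_nonneg x]
  have hscale : ∀ y : ℝ, Tendsto (fun a : ℝ => (a * s)⁻¹ * y) atTop (nhds 0) := by
    intro y
    simpa using (tendsto_inv_atTop_zero.comp (tendsto_id.atTop_mul_const hs)).mul_const y
  have hlim : Tendsto (fun a : ℝ => ∫ y, gaussianPDFReal 0 1 ((a * s)⁻¹ * y) * g y) atTop
      (nhds (∫ y, gaussianPDFReal 0 1 0 * g y)) := by
    refine tendsto_integral_filter_of_dominated_convergence
      (fun y => gaussianPDFReal 0 1 0 * ‖g y‖) ?_ ?_ (hg.norm.const_mul _) ?_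
    · refine Eventually.of_forall fun a => ?_
      exact (hcont.comp (by fun_prop)).aestronglyMeasurable.mul hg.aestronglyMeasurable
    · refine Eventually.of_forall fun a => ae_of_all _ fun y => ?_
      rw [norm_mul, Real.norm_of_nonneg (gaussianPDFReal_nonneg _ _ _)]
      exact mul_le_mul_of_nonneg_right (hle _) (norm_nonneg _)
    · exact ae_of_all _ fun y => ((hcont.tendsto 0).comp (hscale y)).mul_const _
  refine (hlim.const_mul s⁻¹).congr' ?_
  filter_upwards [eventually_gt_atTop 0] with a ha
  have has : 0 < a * s := mul_pos ha hs
  have hsub := Measure.integral_comp_mul_left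
    (fun y => gaussianPDFReal 0 1 ((a * s)⁻¹ * y) * g y) (a * s)
  simp only [inv_mul_cancel_left₀ has.ne', abs_of_pos (inv_pos.2 has), smul_eq_mul] at hsub
  rw [integral_gaussianReal_eq_integral_smul one_ne_zero]
  simp only [smul_eq_mul]
  rw [hsub]
  field_simp

/-- Asymptotics of the Gaussian average of the squared sigmoid derivative:
`a · ∫ (σ'(a s x))² dγ(x) → 1/(6 s √(2π))` as `a → ∞`, for `s > 0`. -/
theorem sigmoid_deriv_sq_gaussian_asymptotics
    (s : ℝ) (hs : 0 < s)
    (σ σ' : ℝ → ℝ)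
    (hσ : ∀ x, σ x = 1 / (1 + Real.exp (-x)))
    (hσ' : ∀ x, σ' x = σ x * (1 - σ x)) :
    Tendsto (fun a : ℝ => a * ∫ x, (σ' (a * s * x)) ^ 2 ∂(gaussianReal 0 1))
      atTop (nhds (1 / (6 * s * Real.sqrt (2 * Real.pi)))) := by
  have hsig : ∀ x, (σ' x) ^ 2 = (Real.sigmoid x * (1 - Real.sigmoid x)) ^ 2 := fun x => by
    rw [hσ', hσ, Real.sigmoid_def, one_div]
  simp_rw [hsig]
  convert tendsto_mul_integral_comp_mul_gaussianReal integrable_sigmoid_deriv_sq hs using 2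
  rw [integral_const_mul, integral_sigmoid_deriv_sq]
  simp [gaussianPDFReal]
  field_simp
end

section
/- Fix C > 0 and A > 0, and let γ be the standard Gaussian measure on ℝ. For a ≥ 0 define R(a) = ∫ σ(a√C·x)² dγ(x), R'(a) = ∫ (σ'(a√C·x))² dγ(x), V(a) = C·R(a), D(a) = ∫ (1 − tanh(√(V(a))·x)²)² dγ(x), and ρ(a) = A·√( D(a)·( R(a) + a²·R'(a)·C ) ). Then ρ(a) = Θ(√a) as a → ∞; that is, there exist constants c₁, c₂ > 0 and a₀ ≥ 0 such that c₁·√a ≤ ρ(a) ≤ c₂·√a for all a ≥ a₀. -/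
open MeasureTheory ProbabilityTheory

/-!
Put `b = a √C`. The reset-gate average `R` lies in `[0, 1]`, so `V ≤ C` and `D` lies between a
positive constant and `1` (`integral_gaussian_ge` applied on `[0, 1]`). Only the term
`a² C R'(a) = b² ∫ σ'(b x)² dγ(x)` grows, and the integral is of order `1 / b`: the integrand
concentrates on `|x| ≲ 1 / b`. The upper bound comes from `σ'(y)² ≤ 1 / (1 + y²)`, a
Gaussian density below `1` and the substitution `y = b x` (`integral_gaussian_inv_le`). The lower
bound comes from `[0, 1 / b]`, where `σ'(b x)` and the density are bounded below
(`integral_gaussian_ge` again). Hence the radicand is of exact order `a`.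
-/

/-- The minimum over `[0, 1]` of the standard Gaussian density. -/
noncomputable def gaussianFloor : ℝ := (Real.sqrt (2 * Real.pi))⁻¹ * Real.exp (-1 / 2)

lemma gaussianFloor_pos : 0 < gaussianFloor := by
  unfold gaussianFloor; positivity

lemma gaussianFloor_le_pdf {x : ℝ} (h0 : 0 ≤ x) (h1 : x ≤ 1) :
    gaussianFloor ≤ gaussianPDFReal 0 1 x := by
  unfold gaussianFloor gaussianPDFReal
  simp only [NNReal.coe_one, mul_one, sub_zero]
  gcongr
  nlinarith

lemma gaussianPDFReal_std_le_one (x : ℝ) : gaussianPDFReal 0 1 x ≤ 1 := by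
  unfold gaussianPDFReal
  simp only [NNReal.coe_one, mul_one, sub_zero]
  have h1 : (1 : ℝ) ≤ Real.sqrt (2 * Real.pi) := by
    rw [Real.one_le_sqrt]
    linarith [Real.pi_gt_three]
  have h2 : Real.exp (-x ^ 2 / 2) ≤ 1 := by
    rw [Real.exp_le_one_iff]
    nlinarith [sq_nonneg x]
  exact mul_le_one₀ (inv_le_one_of_one_le₀ h1) (Real.exp_pos _).le h2

/-- A lower bound for a Gaussian average from a lower bound of the integrand on `[0, δ]`. -/
lemma integral_gaussian_ge {f : ℝ → ℝ} (hf : Integrable f (gaussianReal 0 1))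
    (h0 : ∀ x, 0 ≤ f x) {δ m : ℝ} (hδ0 : 0 ≤ δ) (hδ : δ ≤ 1) (hm : 0 ≤ m)
    (hfm : ∀ x ∈ Set.Icc 0 δ, m ≤ f x) :
    m * (δ * gaussianFloor) ≤ ∫ x, f x ∂(gaussianReal 0 1) := by
  have hmass : δ * gaussianFloor ≤ (gaussianReal 0 1).real (Set.Icc 0 δ) := by
    have hint : IntegrableOn (gaussianPDFReal 0 1) (Set.Icc 0 δ) :=
      (integrable_gaussianPDFReal 0 1).integrableOn
    rw [measureReal_def, gaussianReal_apply_eq_integral 0 (by norm_num) _, ENNReal.toReal_ofReal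
      (setIntegral_nonneg measurableSet_Icc fun x _ => gaussianPDFReal_nonneg 0 1 x)]
    have := setIntegral_mono_on (μ := volume) (s := Set.Icc 0 δ)
      (f := fun _ => gaussianFloor) (integrableOn_const (by simp)) hint measurableSet_Icc
      (fun x hx => gaussianFloor_le_pdf hx.1 (hx.2.trans hδ))
    simpa [hδ0] using this
  calc m * (δ * gaussianFloor) ≤ m * (gaussianReal 0 1).real (Set.Icc 0 δ) := by gcongr
    _ = ∫ x in Set.Icc 0 δ, m ∂(gaussianReal 0 1) := by simp [mul_comm]
    _ ≤ ∫ x in Set.Icc 0 δ, f x ∂(gaussianReal 0 1) :=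
        setIntegral_mono_on (integrableOn_const (by simp)) hf.integrableOn measurableSet_Icc hfm
    _ ≤ ∫ x, f x ∂(gaussianReal 0 1) :=
        setIntegral_le_integral hf (Filter.Eventually.of_forall h0)

lemma integral_gaussian_inv_le {b : ℝ} (hb : 0 < b) :
    ∫ x, (1 + (b * x) ^ 2)⁻¹ ∂(gaussianReal 0 1) ≤ Real.pi / b := by
  rw [integral_gaussianReal_eq_integral_smul (by norm_num)]
  have hint : Integrable fun x : ℝ => (1 + (b * x) ^ 2)⁻¹ :=
    integrable_inv_one_add_sq.comp_mul_left' hb.ne'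
  calc ∫ x, gaussianPDFReal 0 1 x • (1 + (b * x) ^ 2)⁻¹
      ≤ ∫ x : ℝ, (1 + (b * x) ^ 2)⁻¹ := by
        apply integral_mono_of_nonneg _ hint
        · refine Filter.Eventually.of_forall fun x => ?_
          exact mul_le_of_le_one_left (by positivity) (gaussianPDFReal_std_le_one x)
        · refine Filter.Eventually.of_forall fun x => ?_
          exact mul_nonneg (gaussianPDFReal_nonneg 0 1 x) (by positivity)
    _ = Real.pi / b := by
        rw [Measure.integral_comp_mul_left (fun y : ℝ => (1 + y ^ 2)⁻¹) b,
          integral_univ_inv_one_add_sq, abs_of_pos (inv_pos.2 hb), smul_eq_mul]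
        field_simp

/-- A continuous function with values in `[0, 1]` is Gaussian-integrable. -/
lemma integrable_gaussian_of_mem_unit {f : ℝ → ℝ} (hc : Continuous f) (h0 : ∀ x, 0 ≤ f x)
    (h1 : ∀ x, f x ≤ 1) : Integrable f (gaussianReal 0 1) :=
  Integrable.of_bound hc.aestronglyMeasurable 1
    (Filter.Eventually.of_forall fun x => by
      rw [Real.norm_eq_abs, abs_of_nonneg (h0 x)]; exact h1 x)

lemma integral_gaussian_le_one {f : ℝ → ℝ} (hc : Continuous f) (h0 : ∀ x, 0 ≤ f x)
    (h1 : ∀ x, f x ≤ 1) : ∫ x, f x ∂(gaussianReal 0 1) ≤ 1 := by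
  simpa using integral_mono (integrable_gaussian_of_mem_unit hc h0 h1) (integrable_const 1) h1

lemma one_sub_tanh_sq (x : ℝ) : 1 - Real.tanh x ^ 2 = (Real.cosh x ^ 2)⁻¹ := by
  have h := Real.cosh_pos x
  rw [Real.tanh_eq_sinh_div_cosh]
  field_simp
  linarith [Real.cosh_sq x]

/-- The logistic derivative in hyperbolic form. -/
lemma logistic_mul_one_sub (y : ℝ) :
    1 / (1 + Real.exp (-y)) * (1 - 1 / (1 + Real.exp (-y))) = (2 + 2 * Real.cosh y)⁻¹ := by
  have h := Real.exp_pos y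
  rw [Real.cosh_eq, Real.exp_neg]
  field_simp
  ring

lemma logistic_deriv_sq_le (y : ℝ) : ((2 + 2 * Real.cosh y)⁻¹) ^ 2 ≤ (1 + y ^ 2)⁻¹ := by
  have hs : |y| ≤ |Real.sinh y| := by
    rw [Real.abs_sinh]
    exact Real.self_le_sinh_iff.2 (abs_nonneg y)
  have hs2 : y ^ 2 ≤ Real.sinh y ^ 2 := sq_le_sq.2 hs
  rw [inv_pow]
  apply inv_anti₀ (by positivity)
  nlinarith [Real.cosh_sq y, Real.cosh_pos y]

theorem gru_reset_gate_spectral_radius_sqrt_growth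
    (C A : ℝ) (hC : 0 < C) (hA : 0 < A)
    (σ σ' : ℝ → ℝ)
    (hσ : ∀ x, σ x = 1 / (1 + Real.exp (-x)))
    (hσ' : ∀ x, σ' x = σ x * (1 - σ x))
    (R R' V D ρ : ℝ → ℝ)
    (hR : ∀ a, R a = ∫ x, (σ (a * Real.sqrt C * x)) ^ 2 ∂(gaussianReal 0 1))
    (hR' : ∀ a, R' a = ∫ x, (σ' (a * Real.sqrt C * x)) ^ 2 ∂(gaussianReal 0 1))
    (hV : ∀ a, V a = C * R a)
    (hD : ∀ a, D a = ∫ x, (1 - (Real.tanh (Real.sqrt (V a) * x)) ^ 2) ^ 2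
      ∂(gaussianReal 0 1))
    (hρ : ∀ a, ρ a = A * Real.sqrt (D a * (R a + a ^ 2 * R' a * C))) :
    ∃ c₁ > (0 : ℝ), ∃ c₂ > (0 : ℝ), ∃ a₀ : ℝ, 0 ≤ a₀ ∧
      ∀ a ≥ a₀, c₁ * Real.sqrt a ≤ ρ a ∧ ρ a ≤ c₂ * Real.sqrt a := by
  have hs : 0 < Real.sqrt C := Real.sqrt_pos.2 hC
  have hss : Real.sqrt C ^ 2 = C := Real.sq_sqrt hC.le
  have hκ := gaussianFloor_pos
  have hσc : Continuous σ := by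
    rw [funext hσ]
    exact continuous_const.div (by fun_prop) fun x => by positivity
  have hσ0 : ∀ x, 0 ≤ σ x := fun x => by rw [hσ]; positivity
  have hσ1 : ∀ x, σ x ≤ 1 := fun x => by
    rw [hσ, div_le_one (by positivity)]
    linarith [Real.exp_pos (-x)]
  have hR0 : ∀ a, 0 ≤ R a := fun a => by
    rw [hR]; exact integral_nonneg fun x => sq_nonneg _
  have hR1 : ∀ a, R a ≤ 1 := fun a => by
    rw [hR]
    exact integral_gaussian_le_one (by fun_prop) (fun x => sq_nonneg _)
      fun x => pow_le_one₀ (hσ0 _) (hσ1 _)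
  -- Bounds on `D`, using `√V ≤ √C`.
  set d : ℝ := ((Real.cosh (Real.sqrt C) ^ 2)⁻¹) ^ 2 * (1 * gaussianFloor) with hd
  have hd0 : 0 < d := by
    have := Real.cosh_pos (Real.sqrt C)
    positivity
  have hDeq : ∀ a, D a = ∫ x, ((Real.cosh (Real.sqrt (V a) * x) ^ 2)⁻¹) ^ 2
      ∂(gaussianReal 0 1) := fun a => by
    rw [hD]; simp_rw [one_sub_tanh_sq]
  have hDc : ∀ s : ℝ, Continuous fun x : ℝ => ((Real.cosh (s * x) ^ 2)⁻¹) ^ 2 := fun s => by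
    refine (Continuous.inv₀ ?_ fun x => ?_).pow 2
    · exact (Real.continuous_cosh.comp (continuous_const.mul continuous_id)).pow 2
    · exact (pow_pos (Real.cosh_pos _) 2).ne'
  have hDu : ∀ y : ℝ, ((Real.cosh y ^ 2)⁻¹) ^ 2 ≤ 1 := fun y =>
    pow_le_one₀ (by positivity) (inv_le_one_of_one_le₀ (one_le_pow₀ (Real.one_le_cosh y)))
  have hD1 : ∀ a, D a ≤ 1 := fun a => by
    rw [hDeq]
    exact integral_gaussian_le_one (hDc _) (fun x => by positivity) fun x => hDu _
  have hDd : ∀ a, d ≤ D a := fun a => by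
    rw [hDeq, hd]
    refine integral_gaussian_ge
      (integrable_gaussian_of_mem_unit (hDc _) (fun x => by positivity) fun x => hDu _)
      (fun x => by positivity) zero_le_one le_rfl (by positivity) fun x hx => ?_
    have hVC : Real.sqrt (V a) ≤ Real.sqrt C := by
      apply Real.sqrt_le_sqrt
      rw [hV]
      exact mul_le_of_le_one_right hC.le (hR1 a)
    have hle : Real.sqrt (V a) * x ≤ Real.sqrt C := by
      nlinarith [hx.1, hx.2, Real.sqrt_nonneg (V a)]
    have hnn : 0 ≤ Real.sqrt (V a) * x := mul_nonneg (Real.sqrt_nonneg _) hx.1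
    have hch : Real.cosh (Real.sqrt (V a) * x) ≤ Real.cosh (Real.sqrt C) := by
      rw [Real.cosh_le_cosh, abs_of_nonneg hnn, abs_of_pos hs]
      exact hle
    have := Real.cosh_pos (Real.sqrt (V a) * x)
    gcongr
  -- Bounds on `R'` of order `1 / b`, where `b = a √C`.
  have hσ'eq : ∀ y, σ' y = (2 + 2 * Real.cosh y)⁻¹ := fun y => by
    rw [hσ', hσ, logistic_mul_one_sub]
  have hσ'c : Continuous σ' := by
    rw [funext hσ']; fun_prop
  have hσ'u : ∀ y, σ' y ^ 2 ≤ (1 + y ^ 2)⁻¹ := fun y => by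
    rw [hσ'eq]; exact logistic_deriv_sq_le y
  have hσ'1 : ∀ y, σ' y ^ 2 ≤ 1 := fun y =>
    (hσ'u y).trans (inv_le_one_of_one_le₀ (by nlinarith [sq_nonneg y]))
  have hσ'int : ∀ b : ℝ, Integrable (fun x => σ' (b * x) ^ 2) (gaussianReal 0 1) := fun b =>
    integrable_gaussian_of_mem_unit (by fun_prop) (fun x => sq_nonneg _) fun x => hσ'1 _
  have hR'u : ∀ a, 0 < a → R' a ≤ Real.pi / (a * Real.sqrt C) := fun a ha => by
    rw [hR']
    refine le_trans (integral_mono (hσ'int _) ?_ fun x => hσ'u _)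
      (integral_gaussian_inv_le (mul_pos ha hs))
    refine integrable_gaussian_of_mem_unit ?_ (fun x => by positivity) fun x =>
      inv_le_one_of_one_le₀ (by nlinarith [sq_nonneg (a * Real.sqrt C * x)])
    exact Continuous.inv₀ (by fun_prop) fun x => by positivity
  set m : ℝ := ((2 + 2 * Real.cosh 1)⁻¹) ^ 2 with hm
  have hm0 : 0 < m := by
    have := Real.cosh_pos 1
    positivity
  have hR'l : ∀ a, 1 ≤ a * Real.sqrt C →
      m * ((a * Real.sqrt C)⁻¹ * gaussianFloor) ≤ R' a := fun a ha => by
    have hb : 0 < a * Real.sqrt C := by linarith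
    rw [hR']
    refine integral_gaussian_ge (hσ'int _) (fun x => sq_nonneg _) (by positivity)
      (inv_le_one_of_one_le₀ ha) hm0.le fun x hx => ?_
    have hnn : 0 ≤ a * Real.sqrt C * x := mul_nonneg hb.le hx.1
    have hle : a * Real.sqrt C * x ≤ 1 := by
      calc a * Real.sqrt C * x ≤ a * Real.sqrt C * (a * Real.sqrt C)⁻¹ := by
            gcongr; exact hx.2
        _ = 1 := mul_inv_cancel₀ hb.ne'
    have hch : Real.cosh (a * Real.sqrt C * x) ≤ Real.cosh 1 := by
      rw [Real.cosh_le_cosh, abs_of_nonneg hnn, abs_one]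
      exact hle
    have := Real.cosh_pos (a * Real.sqrt C * x)
    rw [hσ'eq, hm]
    gcongr
  refine ⟨A * Real.sqrt (d * (m * gaussianFloor * Real.sqrt C)), by positivity,
    A * Real.sqrt (1 + Real.pi * Real.sqrt C), by positivity,
    max 1 (Real.sqrt C)⁻¹, by positivity, fun a ha => ?_⟩
  have ha1 : 1 ≤ a := (le_max_left _ _).trans ha
  have ha0 : 0 < a := by linarith
  have hb1 : 1 ≤ a * Real.sqrt C := by
    rw [← inv_le_iff_one_le_mul₀ hs]
    exact (le_max_right _ _).trans ha
  have hlow : m * gaussianFloor * Real.sqrt C * a ≤ a ^ 2 * R' a * C := by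
    calc m * gaussianFloor * Real.sqrt C * a
        = a ^ 2 * (m * ((a * Real.sqrt C)⁻¹ * gaussianFloor)) * Real.sqrt C ^ 2 := by
          field_simp
      _ ≤ a ^ 2 * R' a * C := by
          rw [hss]
          have := hR'l a hb1
          gcongr
  have hupp : a ^ 2 * R' a * C ≤ Real.pi * Real.sqrt C * a := by
    calc a ^ 2 * R' a * C ≤ a ^ 2 * (Real.pi / (a * Real.sqrt C)) * C := by
          have := hR'u a ha0
          gcongr
      _ = a ^ 2 * (Real.pi / (a * Real.sqrt C)) * Real.sqrt C ^ 2 := by rw [hss]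
      _ = Real.pi * Real.sqrt C * a := by field_simp
  have hX : 0 ≤ m * gaussianFloor * Real.sqrt C * a := by positivity
  have hRa := hR0 a
  rw [hρ, mul_assoc A, mul_assoc A, ← Real.sqrt_mul (by positivity),
    ← Real.sqrt_mul (by positivity)]
  constructor
  · refine mul_le_mul_of_nonneg_left (Real.sqrt_le_sqrt ?_) hA.le
    calc d * (m * gaussianFloor * Real.sqrt C) * a
        = d * (m * gaussianFloor * Real.sqrt C * a) := by ring
      _ ≤ D a * (R a + a ^ 2 * R' a * C) :=
          mul_le_mul (hDd a) (by linarith) hX (hd0.le.trans (hDd a))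
  · refine mul_le_mul_of_nonneg_left (Real.sqrt_le_sqrt ?_) hA.le
    calc D a * (R a + a ^ 2 * R' a * C)
        ≤ R a + a ^ 2 * R' a * C := mul_le_of_le_one_left (by linarith) (hD1 a)
      _ ≤ (1 + Real.pi * Real.sqrt C) * a := by
          have := hR1 a
          linarith
end

section
/- Let C > 0 and β ∈ ℝ, and let γ be the standard Gaussian measure on ℝ. Then lim_{a→∞} ∫ σ( a·(√C·x + β) ) dγ(x) = Φ(β/√C), where Φ is the standard Gaussian cumulative distribution function. Equivalently, the fraction of closed update gates α = 1 − lim_{a→∞} E[σ(a(√C x + β))] equals (1/2)·erfc( β/√(2C) ). -/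
open MeasureTheory ProbabilityTheory Filter

/-!
As `a → ∞`, the function `x ↦ σ (a (√C x + β))` converges to the indicator of the half-line
`[-β/√C, ∞)` at every point except the root `x = -β/√C`, which is Gaussian-null. Since the
sigmoid lies in `[0, 1]`, dominated convergence gives the Gaussian mass of that half-line as the
limit, and the symmetry of the Gaussian under `x ↦ -x` turns it into the mass of `(-∞, β/√C]`.
-/

/-- The two half-lines are exchanged by `x ↦ -x`, which preserves the centred Gaussian. -/
lemma gaussianReal_real_Ici_neg (t : ℝ) :
    (gaussianReal 0 1).real (Set.Ici (-t)) = ((gaussianReal 0 1) (Set.Iic t)).toReal := by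
  have h := gaussianReal_map_neg (μ := 0) (v := 1)
  rw [neg_zero] at h
  conv_rhs => rw [← h, Measure.map_apply measurable_neg measurableSet_Iic]
  simp [Measure.real]

/-- In the limit of large gate gain, the mean update gate converges to a Gaussian
probability: `∫ σ(a(√C x + β)) dγ(x) → Φ(β/√C)` as `a → ∞`, where `Φ` is the
standard Gaussian cumulative distribution function. -/
theorem mean_update_gate_limit
    (C β : ℝ) (hC : 0 < C)
    (σ : ℝ → ℝ) (hσ : ∀ x, σ x = 1 / (1 + Real.exp (-x)))
    (Φ : ℝ → ℝ) (hΦ : ∀ t, Φ t = ((gaussianReal 0 1) (Set.Iic t)).toReal) :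
    Tendsto (fun a : ℝ =>
        ∫ x, σ (a * (Real.sqrt C * x + β)) ∂(gaussianReal 0 1))
      atTop (nhds (Φ (β / Real.sqrt C))) := by
  obtain rfl : σ = Real.sigmoid := by
    funext x
    rw [hσ, Real.sigmoid_def, one_div]
  have hs : 0 < Real.sqrt C := Real.sqrt_pos.2 hC
  rw [hΦ, ← gaussianReal_real_Ici_neg, ← integral_indicator_one measurableSet_Ici]
  refine tendsto_integral_filter_of_dominated_convergence (fun _ => 1) ?_ ?_
    (integrable_const 1) ?_
  · exact .of_forall fun a =>
      (continuous_sigmoid.comp (by fun_prop)).aestronglyMeasurable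
  · refine .of_forall fun a => .of_forall fun x => ?_
    rw [Real.norm_of_nonneg (Real.sigmoid_nonneg _)]
    exact Real.sigmoid_le_one _
  · have := nullSingletonClass_gaussianReal (μ := 0) (v := 1) one_ne_zero
    have hne : ∀ᵐ x ∂(gaussianReal 0 1), x ≠ -(β / Real.sqrt C) := by
      simp [ae_iff]
    filter_upwards [hne] with x hx
    have hβ : Real.sqrt C * (β / Real.sqrt C) = β := mul_div_cancel₀ β hs.ne'
    rcases lt_or_gt_of_ne hx with h | h
    · have hneg : Real.sqrt C * x + β < 0 := by nlinarith
      rw [Set.indicator_of_notMem (by simpa using h)]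
      exact Real.tendsto_sigmoid_atBot.comp (tendsto_id.atTop_mul_const_of_neg hneg)
    · have hpos : 0 < Real.sqrt C * x + β := by nlinarith
      rw [Set.indicator_of_mem (by simpa using h.le)]
      exact Real.tendsto_sigmoid_atTop.comp (tendsto_id.atTop_mul_const hpos)
end

section
/- Let g(v) = ∫ tanh(√v·x)² dγ(x) for v ≥ 0, where γ is the standard Gaussian measure on ℝ. Then g(v) = v − 2v² + (17/3)v³ + O(v⁴) as v → 0⁺; in particular lim_{v→0⁺} (g(v) − v + 2v²)/v³ = 17/3. -/
/-!
The Taylor expansion `tanh² y = y² - (2/3) y⁴ + (17/45) y⁶ + R(y)` has a remainder with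
`|R(y)| ≤ y⁸ + y¹⁶` for all real `y` (`abs_tanh_sq_sub_le`). For `y ≥ 0` this comes from the
differential equation `tanh' = 1 - tanh²`: an upper bound on `tanh` integrates to a lower bound
and vice versa, each gaining two orders.

Putting `y = √v x` and integrating against the standard Gaussian, whose moments of order 2, 4, 6
are 1, 3, 15 (`gaussian_moments`), gives `v - 2 v² + (17/3) v³` with an error of at most
`v⁴ E[x⁸] + v⁸ E[x¹⁶]` (`abs_integral_tanh_sq_sub_le`), which is `o(v³)`.
-/

open MeasureTheory ProbabilityTheory Filter

lemma hasDerivAt_tanh_real (y : ℝ) : HasDerivAt Real.tanh (1 - Real.tanh y ^ 2) y := by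
  have hc := (Real.cosh_pos y).ne'
  have h := (Real.hasDerivAt_sinh y).div (Real.hasDerivAt_cosh y) hc
  have e : Real.tanh = Real.sinh / Real.cosh := by
    funext x; exact Real.tanh_eq_sinh_div_cosh x
  rw [Real.tanh_eq_sinh_div_cosh, e]
  refine h.congr_deriv ?_
  field_simp

/-- Comparison principle on the half-line: each Taylor-type bound on `tanh` below is an instance,
obtained by inserting the previous bounds into `tanh' = 1 - tanh²`. -/
lemma nonneg_of_hasDerivAt_nonneg {F F' : ℝ → ℝ} (hF : ∀ y, HasDerivAt F (F' y) y)
    (h0 : F 0 = 0) (hF' : ∀ y, 0 ≤ y → 0 ≤ F' y) {y : ℝ} (hy : 0 ≤ y) : 0 ≤ F y := by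
  have hmono : MonotoneOn F (Set.Ici 0) := by
    refine monotoneOn_of_deriv_nonneg (convex_Ici 0)
      (fun x _ => (hF x).continuousAt.continuousWithinAt)
      (fun x _ => (hF x).differentiableAt.differentiableWithinAt) ?_
    intro x hx
    rw [interior_Ici] at hx
    rw [(hF x).deriv]
    exact hF' x (le_of_lt hx)
  simpa [h0] using hmono (Set.mem_Ici.2 le_rfl) (Set.mem_Ici.2 hy) hy

lemma tanh_nonneg_of_nonneg {y : ℝ} (hy : 0 ≤ y) : 0 ≤ Real.tanh y :=
  nonneg_of_hasDerivAt_nonneg hasDerivAt_tanh_real Real.tanh_zero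
    (fun x _ => by linarith [Real.tanh_sq_lt_one x]) hy

lemma tanh_le_deg_one {y : ℝ} (hy : 0 ≤ y) : Real.tanh y ≤ y := by
  have := nonneg_of_hasDerivAt_nonneg
    (fun x => (hasDerivAt_id x).sub (hasDerivAt_tanh_real x)) (by simp)
    (fun x _ => by nlinarith [sq_nonneg (Real.tanh x)]) hy
  simpa using this

lemma le_tanh_deg_three {y : ℝ} (hy : 0 ≤ y) : y - y ^ 3 / 3 ≤ Real.tanh y := by
  have := nonneg_of_hasDerivAt_nonneg
    (fun x => (hasDerivAt_tanh_real x).sub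
      ((hasDerivAt_id x).sub ((hasDerivAt_pow 3 x).div_const 3))) (by simp)
    (fun x hx => by
      have h1 := tanh_le_deg_one hx
      have h2 := tanh_nonneg_of_nonneg hx
      norm_num
      nlinarith) hy
  simp at this
  linarith

lemma tanh_le_deg_five {y : ℝ} (hy : 0 ≤ y) :
    Real.tanh y ≤ y - y ^ 3 / 3 + 2 * y ^ 5 / 15 := by
  have := nonneg_of_hasDerivAt_nonneg
    (fun x => (((hasDerivAt_id x).sub ((hasDerivAt_pow 3 x).div_const 3)).add
      (((hasDerivAt_pow 5 x).const_mul 2).div_const 15)).sub (hasDerivAt_tanh_real x)) (by simp)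
    (fun x hx => by
      have h1 := tanh_le_deg_one hx
      have h2 := tanh_nonneg_of_nonneg hx
      have h3 := le_tanh_deg_three hx
      -- `x² - tanh² x = (x - tanh x)(x + tanh x) ≤ (x³/3)(2x)`
      have h4 : (x - Real.tanh x) * (x + Real.tanh x) ≤ (x ^ 3 / 3) * (2 * x) :=
        mul_le_mul (by linarith) (by linarith) (by linarith) (by positivity)
      norm_num
      nlinarith) hy
  simp at this
  linarith

/-- Squaring the degree-five bound gives the correct expansion through `y ^ 6`; the `y ^ 8` term of
the square is negative and is dropped. -/
lemma tanh_sq_le {y : ℝ} (hy : 0 ≤ y) :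
    Real.tanh y ^ 2 ≤ y ^ 2 - 2 / 3 * y ^ 4 + 17 / 45 * y ^ 6 + 4 / 225 * y ^ 10 := by
  have h := pow_le_pow_left₀ (tanh_nonneg_of_nonneg hy) (tanh_le_deg_five hy) 2
  have : 0 ≤ y ^ 8 := by positivity
  nlinarith

/-- Lower bound with the correct Taylor coefficients through `y ^ 7`; the `y ^ 11` term integrates
the `y ^ 10` error of `tanh_sq_le`. -/
lemma le_tanh_deg_eleven {y : ℝ} (hy : 0 ≤ y) :
    y - y ^ 3 / 3 + 2 * y ^ 5 / 15 - 17 * y ^ 7 / 315 - 4 * y ^ 11 / 2475 ≤ Real.tanh y := by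
  have := nonneg_of_hasDerivAt_nonneg
    (fun x => (hasDerivAt_tanh_real x).sub
      (((((hasDerivAt_id x).sub ((hasDerivAt_pow 3 x).div_const 3)).add
      (((hasDerivAt_pow 5 x).const_mul 2).div_const 15)).sub
      (((hasDerivAt_pow 7 x).const_mul 17).div_const 315)).sub
      (((hasDerivAt_pow 11 x).const_mul 4).div_const 2475))) (by simp)
    (fun x hx => by
      have h1 := tanh_sq_le hx
      norm_num
      linarith) hy
  simp at this
  linarith

lemma abs_tanh_sq_sub_le_of_nonneg {y : ℝ} (hy : 0 ≤ y) :
    |Real.tanh y ^ 2 - y ^ 2 + 2 / 3 * y ^ 4 - 17 / 45 * y ^ 6| ≤ y ^ 8 + y ^ 16 := by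
  set t := Real.tanh y with ht
  have h8 : 0 ≤ y ^ 8 := by positivity
  have h16 : 0 ≤ y ^ 16 := by positivity
  have h10 : y ^ 10 ≤ y ^ 8 + y ^ 16 := by
    nlinarith [mul_nonneg h8 (sq_nonneg (y ^ 2 - 1)), mul_nonneg h8 (sq_nonneg (y ^ 4 - 1))]
  have h12 : y ^ 12 ≤ y ^ 8 + y ^ 16 := by
    nlinarith [mul_nonneg h8 (sq_nonneg (y ^ 4 - 1))]
  have n10 : 0 ≤ y ^ 10 := by positivity
  have n12 : 0 ≤ y ^ 12 := by positivity
  have n14 : 0 ≤ y ^ 14 := by positivity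
  have hU := tanh_sq_le hy
  have h5 := tanh_le_deg_five hy
  have h11 := le_tanh_deg_eleven hy
  have h1 := tanh_le_deg_one hy
  have h0 := tanh_nonneg_of_nonneg hy
  rw [← ht] at hU h5 h11 h1 h0
  -- With `q` the degree-five polynomial, `q² - t² = (q - t)(q + t)`; the factor `q - t` is
  -- controlled by `h11`, and `q + t` by `t ≤ y`.
  have hL : (y - y ^ 3 / 3 + 2 * y ^ 5 / 15 - t) * (y - y ^ 3 / 3 + 2 * y ^ 5 / 15 + t) ≤
      (17 * y ^ 7 / 315 + 4 * y ^ 11 / 2475) * (2 * (y + 2 * y ^ 5 / 15)) := by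
    have : 0 ≤ y ^ 3 := by positivity
    have : 0 ≤ y ^ 5 := by positivity
    exact mul_le_mul (by linarith) (by linarith) (by linarith) (by positivity)
  rw [abs_le]
  constructor
  · nlinarith
  · nlinarith

/-- Sixth-order Taylor expansion of `tanh²` with a remainder bound valid on the whole line. The
remainder has polynomial growth, so it can be integrated against the Gaussian directly. -/
lemma abs_tanh_sq_sub_le (y : ℝ) :
    |Real.tanh y ^ 2 - y ^ 2 + 2 / 3 * y ^ 4 - 17 / 45 * y ^ 6| ≤ y ^ 8 + y ^ 16 := by
  rcases le_total 0 y with hy | hy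
  · exact abs_tanh_sq_sub_le_of_nonneg hy
  · have := abs_tanh_sq_sub_le_of_nonneg (neg_nonneg.2 hy)
    simpa [Real.tanh_neg, Even.neg_pow (by decide : Even 2), Even.neg_pow (by decide : Even 4),
      Even.neg_pow (by decide : Even 6), Even.neg_pow (by decide : Even 8),
      Even.neg_pow (by decide : Even 16)] using this

lemma integrable_pow_gaussianReal (n : ℕ) :
    Integrable (fun x : ℝ => x ^ n) (gaussianReal 0 1) :=
  integrable_pow_of_mem_interior_integrableExpSet (X := id) (by simp) n

/-- If `E[Xⁿ e^{tX}] = p(t) e^{t²/2}` for `X` standard Gaussian, differentiating in `t` gives the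
same form for `n + 1`, with the polynomial `p' + t p`. Setting `t = 0` yields the moments. -/
lemma gaussian_tilted_moment_succ {n : ℕ} {p p' : ℝ → ℝ}
    (h : ∀ t, ∫ x, x ^ n * Real.exp (t * x) ∂(gaussianReal 0 1) = p t * Real.exp (t ^ 2 / 2))
    (hp : ∀ t, HasDerivAt p (p' t) t) (t : ℝ) :
    ∫ x, x ^ (n + 1) * Real.exp (t * x) ∂(gaussianReal 0 1)
      = (p' t + t * p t) * Real.exp (t ^ 2 / 2) := by
  have h1 := hasDerivAt_integral_pow_mul_exp_real (X := id) (μ := gaussianReal 0 1) (t := t)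
    (by simp) n
  have h2 := (hp t).mul (((hasDerivAt_pow 2 t).div_const 2).exp)
  have e : (fun t => ∫ x, id x ^ n * Real.exp (t * id x) ∂(gaussianReal 0 1))
      = p * fun t => Real.exp (t ^ 2 / 2) := funext h
  rw [e] at h1
  have := h1.unique h2
  simp only [id] at this
  rw [this]
  norm_num
  ring

lemma gaussian_moments :
    ∫ x, x ^ 2 ∂(gaussianReal 0 1) = 1 ∧ ∫ x, x ^ 4 ∂(gaussianReal 0 1) = 3 ∧
      ∫ x, x ^ 6 ∂(gaussianReal 0 1) = 15 := by
  have m0 : ∀ t, ∫ x, x ^ 0 * Real.exp (t * x) ∂(gaussianReal 0 1)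
      = (fun _ => 1) t * Real.exp (t ^ 2 / 2) := by
    intro t
    have := congrFun (mgf_id_gaussianReal (μ := 0) (v := 1)) t
    simpa [mgf] using this
  have m1 := gaussian_tilted_moment_succ m0 (fun t => hasDerivAt_const t 1)
  have m2 := gaussian_tilted_moment_succ (p := fun t => t) (p' := fun _ => 1)
    (fun t => by rw [m1]; ring) (fun t => hasDerivAt_id t)
  have m3 := gaussian_tilted_moment_succ (p := fun t => t ^ 2 + 1) (p' := fun t => 2 * t)
    (fun t => by rw [m2]; ring) (fun t => by
      simpa using (hasDerivAt_pow 2 t).add_const 1)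
  have m4 := gaussian_tilted_moment_succ (p := fun t => t ^ 3 + 3 * t)
    (p' := fun t => 3 * t ^ 2 + 3)
    (fun t => by rw [m3]; ring) (fun t => by
      simpa using (hasDerivAt_pow 3 t).fun_add ((hasDerivAt_id t).const_mul 3))
  have m5 := gaussian_tilted_moment_succ (p := fun t => t ^ 4 + 6 * t ^ 2 + 3)
    (p' := fun t => 4 * t ^ 3 + 6 * (2 * t))
    (fun t => by rw [m4]; ring) (fun t => by
      simpa using ((hasDerivAt_pow 4 t).add ((hasDerivAt_pow 2 t).const_mul 6)).add_const 3)
  have m6 := gaussian_tilted_moment_succ (p := fun t => t ^ 5 + 10 * t ^ 3 + 15 * t)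
    (p' := fun t => 5 * t ^ 4 + 10 * (3 * t ^ 2) + 15)
    (fun t => by rw [m5]; ring) (fun t => by
      simpa using ((hasDerivAt_pow 5 t).fun_add ((hasDerivAt_pow 3 t).const_mul 10)).fun_add
        ((hasDerivAt_id t).const_mul 15))
  exact ⟨by simpa using m2 0, by simpa using m4 0, by simpa using m6 0⟩

/-- The quantitative expansion: `g(v) - v + 2v² - (17/3)v³ = O(v⁴)` for bounded `v ≥ 0`. -/
lemma abs_integral_tanh_sq_sub_le {v : ℝ} (hv : 0 ≤ v) :
    |(∫ x, (Real.tanh (Real.sqrt v * x)) ^ 2 ∂(gaussianReal 0 1)) - v + 2 * v ^ 2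
        - 17 / 3 * v ^ 3|
      ≤ v ^ 4 * ∫ x, x ^ 8 ∂(gaussianReal 0 1) + v ^ 8 * ∫ x, x ^ 16 ∂(gaussianReal 0 1) := by
  obtain ⟨e2, e4, e6⟩ := gaussian_moments
  have hs := Real.sq_sqrt hv
  set s := Real.sqrt v
  have i (n : ℕ) (c : ℝ) : Integrable (fun x : ℝ => c * x ^ n) (gaussianReal 0 1) :=
    (integrable_pow_gaussianReal n).const_mul c
  have it : Integrable (fun x => Real.tanh (s * x) ^ 2) (gaussianReal 0 1) := by
    have hcont : Continuous Real.tanh :=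
      continuous_iff_continuousAt.2 fun y => (hasDerivAt_tanh_real y).continuousAt
    refine Integrable.of_bound (C := 1) (by fun_prop) (ae_of_all _ fun x => ?_)
    rw [Real.norm_eq_abs, abs_of_nonneg (sq_nonneg _)]
    exact (Real.tanh_sq_lt_one _).le
  have key : (∫ x, Real.tanh (s * x) ^ 2 ∂(gaussianReal 0 1)) - v + 2 * v ^ 2 - 17 / 3 * v ^ 3
      = ∫ x, (Real.tanh (s * x) ^ 2 - v * x ^ 2 + (2 / 3 * v ^ 2) * x ^ 4
          - (17 / 45 * v ^ 3) * x ^ 6) ∂(gaussianReal 0 1) := by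
    have it2 : Integrable (fun x => Real.tanh (s * x) ^ 2 - v * x ^ 2) (gaussianReal 0 1) :=
      it.sub (i 2 _)
    have it4 : Integrable (fun x => Real.tanh (s * x) ^ 2 - v * x ^ 2 + (2 / 3 * v ^ 2) * x ^ 4)
        (gaussianReal 0 1) := it2.add (i 4 _)
    rw [integral_sub it4 (i 6 _), integral_add it2 (i 4 _), integral_sub it (i 2 _),
      integral_const_mul, integral_const_mul, integral_const_mul, e2, e4, e6]
    ring
  rw [key, ← integral_const_mul, ← integral_const_mul, ← integral_add (i 8 _) (i 16 _),
    ← Real.norm_eq_abs]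
  refine norm_integral_le_of_norm_le ((i 8 _).add (i 16 _)) (ae_of_all _ fun x => ?_)
  rw [Real.norm_eq_abs]
  convert abs_tanh_sq_sub_le (s * x) using 2
  · rw [← hs]; ring
  · rw [← hs]; ring
  · rw [← hs]; ring

/-- Small-variance expansion of the Gaussian-averaged squared tanh:
with `g(v) = ∫ tanh(√v x)² dγ(x)`, one has
`g(v) = v - 2v² + (17/3)v³ + O(v⁴)`, i.e.
`(g(v) - v + 2v²)/v³ → 17/3` as `v → 0⁺`. -/
theorem tanh_sq_gaussian_small_variance_expansion
    (g : ℝ → ℝ)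
    (hg : ∀ v, g v = ∫ x, (Real.tanh (Real.sqrt v * x)) ^ 2 ∂(gaussianReal 0 1)) :
    Tendsto (fun v : ℝ => (g v - v + 2 * v ^ 2) / v ^ 3)
      (nhdsWithin 0 (Set.Ioi 0)) (nhds (17 / 3)) := by
  set A := ∫ x, x ^ 8 ∂(gaussianReal 0 1)
  set B := ∫ x, x ^ 16 ∂(gaussianReal 0 1)
  have hlim : Tendsto (fun v : ℝ => v * A + v ^ 5 * B) (nhdsWithin 0 (Set.Ioi 0)) (nhds 0) := by
    have hc : Continuous fun v : ℝ => v * A + v ^ 5 * B := by fun_prop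
    simpa using (hc.tendsto 0).mono_left nhdsWithin_le_nhds
  rw [tendsto_iff_norm_sub_tendsto_zero]
  refine squeeze_zero' (Eventually.of_forall fun _ => norm_nonneg _) ?_ hlim
  filter_upwards [self_mem_nhdsWithin] with v hv
  have hv : 0 < v := hv
  have hb := abs_integral_tanh_sq_sub_le hv.le
  rw [← hg] at hb
  have e : (g v - v + 2 * v ^ 2) / v ^ 3 - 17 / 3
      = (g v - v + 2 * v ^ 2 - 17 / 3 * v ^ 3) / v ^ 3 := by
    field_simp
  rw [e, Real.norm_eq_abs, abs_div, abs_of_pos (pow_pos hv 3), div_le_iff₀ (pow_pos hv 3)]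
  calc _ ≤ _ := hb
    _ = _ := by ring
end

section
/- Let b ∈ ℝ, let σ(x) = 1/(1+e^{-x}) be the logistic sigmoid, and let h(u) = ∫ σ(√u·x + b)² dγ(x) for u ≥ 0, where γ is the standard Gaussian measure on ℝ. Then lim_{u→0⁺} ( h(u) − σ(b)² ) / u = −( e^{-b} − 2e^{-2b} ) / (1 + e^{-b})⁴. -/
open MeasureTheory ProbabilityTheory Filter

/-!
The function `σ²` has a globally bounded third derivative: `σ' = σ - σ²`, so every derivative of
`σ²` is a polynomial in `σ ∈ (0, 1)`. Hence its second-order Taylor expansion at `b` holds with a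
*global* error `K |y|³` (`sigmoid_sq_taylor`), proved by integrating the bound on the third
derivative three times with the mean value inequality (`abs_le_mul_pow_succ_of_deriv`).
Substituting `y = √u x` and integrating against the standard Gaussian, the linear term vanishes,
the quadratic term gives `u` times half the second derivative, and the error is
`O(u^{3/2})` since the third absolute Gaussian moment is finite. Dividing by `u` gives the limit,
the coefficient being `σ(b)² (1 - σ(b)) (2 - 3 σ(b))`.
-/

lemma abs_le_mul_pow_succ_of_deriv {F F' : ℝ → ℝ} {K : ℝ} {n : ℕ} (hK : 0 ≤ K)
    (hF : ∀ y, HasDerivAt F (F' y) y) (h0 : F 0 = 0) (hb : ∀ y, |F' y| ≤ K * |y| ^ n) (y : ℝ) :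
    |F y| ≤ K * |y| ^ (n + 1) := by
  have key := (convex_segment (𝕜 := ℝ) (0 : ℝ) y).norm_image_sub_le_of_norm_hasDerivWithin_le
    (f := F) (f' := F') (C := K * |y| ^ n) (x := 0) (y := y)
    (fun z _ => (hF z).hasDerivWithinAt) (fun z hz => ?_)
    (left_mem_segment ℝ _ _) (right_mem_segment ℝ _ _)
  · simpa [h0, pow_succ, mul_assoc] using key
  · have hz' : |z| ≤ |y| := by
      rw [segment_eq_uIcc] at hz
      simpa using Set.abs_sub_left_of_mem_uIcc hz
    exact (hb z).trans (by gcongr)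

/-- Second-order Taylor expansion of the squared sigmoid at `b`, with an error bound valid for all
increments `y`. -/
lemma sigmoid_sq_taylor (b y : ℝ) :
    |Real.sigmoid (y + b) ^ 2 - Real.sigmoid b ^ 2
      - (2 * Real.sigmoid b ^ 2 - 2 * Real.sigmoid b ^ 3) * y
      - (2 * Real.sigmoid b ^ 2 - 5 * Real.sigmoid b ^ 3 + 3 * Real.sigmoid b ^ 4) * y ^ 2|
      ≤ 62 * |y| ^ 3 := by
  have hs : ∀ y, HasDerivAt (fun y => Real.sigmoid (y + b))
      (Real.sigmoid (y + b) * (1 - Real.sigmoid (y + b))) y := fun y =>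
    (Real.hasDerivAt_sigmoid (y + b)).comp_add_const y b
  set t := Real.sigmoid b with ht
  -- the second derivative of the remainder
  have h2 : ∀ y, |(4 * Real.sigmoid (y + b) ^ 2 - 10 * Real.sigmoid (y + b) ^ 3
      + 6 * Real.sigmoid (y + b) ^ 4) - (4 * t ^ 2 - 10 * t ^ 3 + 6 * t ^ 4)| ≤ 62 * |y| ^ 1 := by
    refine abs_le_mul_pow_succ_of_deriv (n := 0) (by norm_num)
      (fun y => ((((((hs y).pow 2).const_mul 4).sub (((hs y).pow 3).const_mul 10)).add
        (((hs y).pow 4).const_mul 6)).sub_const _)) (by simp [ht]) (fun y => ?_)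
    have p0 := Real.sigmoid_pos (y + b)
    have p1 := Real.sigmoid_lt_one (y + b)
    generalize Real.sigmoid (y + b) = s at p0 p1 ⊢
    have q2 : s ^ 2 ≤ 1 := pow_le_one₀ p0.le p1.le
    have q3 : s ^ 3 ≤ 1 := pow_le_one₀ p0.le p1.le
    have q4 : s ^ 4 ≤ 1 := pow_le_one₀ p0.le p1.le
    have q5 : s ^ 5 ≤ 1 := pow_le_one₀ p0.le p1.le
    have r2 : 0 ≤ s ^ 2 := by positivity
    have r3 : 0 ≤ s ^ 3 := by positivity
    have r4 : 0 ≤ s ^ 4 := by positivity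
    have r5 : 0 ≤ s ^ 5 := by positivity
    rw [abs_le]
    norm_num
    constructor <;> ring_nf <;> linarith
  have h1 : ∀ y, |(2 * Real.sigmoid (y + b) ^ 2 - 2 * Real.sigmoid (y + b) ^ 3)
      - (2 * t ^ 2 - 2 * t ^ 3) - (4 * t ^ 2 - 10 * t ^ 3 + 6 * t ^ 4) * y| ≤ 62 * |y| ^ 2 := by
    refine abs_le_mul_pow_succ_of_deriv (n := 1) (by norm_num) (fun y => ?_) (by simp [ht]) h2
    refine ((((((hs y).pow 2).const_mul 2).sub (((hs y).pow 3).const_mul 2)).sub_const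
      (2 * t ^ 2 - 2 * t ^ 3)).sub ((hasDerivAt_id y).const_mul
        (4 * t ^ 2 - 10 * t ^ 3 + 6 * t ^ 4))).congr_deriv ?_
    norm_num
    ring
  refine abs_le_mul_pow_succ_of_deriv (n := 2)
    (F := fun y => Real.sigmoid (y + b) ^ 2 - t ^ 2 - (2 * t ^ 2 - 2 * t ^ 3) * y
      - (2 * t ^ 2 - 5 * t ^ 3 + 3 * t ^ 4) * y ^ 2)
    (by norm_num) (fun y => ?_) (by simp [ht]) h1 y
  refine (((((hs y).pow 2).sub_const (t ^ 2)).sub ((hasDerivAt_id y).const_mul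
    (2 * t ^ 2 - 2 * t ^ 3))).sub (((hasDerivAt_id y).pow 2).const_mul
      (2 * t ^ 2 - 5 * t ^ 3 + 3 * t ^ 4))).congr_deriv ?_
  norm_num
  ring

lemma integral_sq_gaussianReal_zero_one : ∫ x, x ^ 2 ∂(gaussianReal 0 1) = 1 := by
  have h := variance_fun_id_gaussianReal (μ := 0) (v := 1)
  rw [variance_eq_integral (by fun_prop)] at h
  simpa using h

/-- Small-variance expansion of the Gaussian-averaged squared sigmoid with bias:
with `h(u) = ∫ σ(√u x + b)² dγ(x)`, one has
`(h(u) - σ(b)²)/u → -(e^{-b} - 2e^{-2b})/(1 + e^{-b})⁴` as `u → 0⁺`. -/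
theorem sigmoid_sq_gaussian_small_variance_expansion
    (b : ℝ)
    (σ : ℝ → ℝ) (hσ : ∀ x, σ x = 1 / (1 + Real.exp (-x)))
    (h : ℝ → ℝ)
    (hh : ∀ u, h u = ∫ x, (σ (Real.sqrt u * x + b)) ^ 2 ∂(gaussianReal 0 1)) :
    Tendsto (fun u : ℝ => (h u - (σ b) ^ 2) / u)
      (nhdsWithin 0 (Set.Ioi 0))
      (nhds (-(Real.exp (-b) - 2 * Real.exp (-2 * b)) / (1 + Real.exp (-b)) ^ 4)) := by
  have hσ' : σ = Real.sigmoid := by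
    ext x
    rw [hσ, Real.sigmoid_def, one_div]
  subst hσ'
  have hc : -(Real.exp (-b) - 2 * Real.exp (-2 * b)) / (1 + Real.exp (-b)) ^ 4
      = 2 * Real.sigmoid b ^ 2 - 5 * Real.sigmoid b ^ 3 + 3 * Real.sigmoid b ^ 4 := by
    have e2 : Real.exp (-2 * b) = Real.exp (-b) ^ 2 := by
      rw [← Real.exp_nat_mul]
      congr 1
      push_cast
      ring
    have hpos := Real.exp_pos (-b)
    rw [e2, Real.sigmoid_def]
    generalize Real.exp (-b) = e at hpos
    field_simp
    ring
  rw [hc]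
  set t := Real.sigmoid b
  set c := 2 * t ^ 2 - 5 * t ^ 3 + 3 * t ^ 4
  set d := 2 * t ^ 2 - 2 * t ^ 3
  set γ := gaussianReal 0 1
  set M := ∫ x, |x| ^ 3 ∂γ
  have i1 : Integrable (fun x : ℝ => x) γ :=
    (memLp_id_gaussianReal 1).integrable (by norm_num)
  have i2 : Integrable (fun x : ℝ => x ^ 2) γ := (memLp_id_gaussianReal 2).integrable_sq
  have i3 : Integrable (fun x : ℝ => |x| ^ 3) γ :=
    (memLp_id_gaussianReal 3).integrable_norm_pow (by norm_num)
  have bound : ∀ u : ℝ, 0 < u → |(h u - t ^ 2) / u - c| ≤ 62 * M * Real.sqrt u := by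
    intro u hu
    have hr : 0 < Real.sqrt u := Real.sqrt_pos.2 hu
    have hru : Real.sqrt u ^ 2 = u := Real.sq_sqrt hu.le
    set r := Real.sqrt u
    have i0 : Integrable (fun x => Real.sigmoid (r * x + b) ^ 2) γ := by
      refine Integrable.of_bound (C := 1) (Continuous.aestronglyMeasurable
        ((continuous_sigmoid.comp (by fun_prop)).pow 2)) (Eventually.of_forall fun x => ?_)
      rw [Real.norm_of_nonneg (by positivity)]
      exact pow_le_one₀ (Real.sigmoid_nonneg _) (Real.sigmoid_le_one _)
    have heq : h u - t ^ 2 - c * u = ∫ x, (Real.sigmoid (r * x + b) ^ 2 - t ^ 2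
        - d * (r * x) - c * (r * x) ^ 2) ∂γ := by
      have j1 : Integrable (fun x => d * (r * x)) γ := (i1.const_mul r).const_mul d
      have j2 : Integrable (fun x => c * (r * x) ^ 2) γ := by
        simp_rw [mul_pow]
        exact (i2.const_mul _).const_mul c
      have k0 : Integrable (fun x => Real.sigmoid (r * x + b) ^ 2 - t ^ 2) γ :=
        i0.sub (integrable_const _)
      have k1 : Integrable (fun x => Real.sigmoid (r * x + b) ^ 2 - t ^ 2 - d * (r * x)) γ :=
        k0.sub j1
      rw [integral_sub k1 j2, integral_sub k0 j1, integral_sub i0 (integrable_const _)]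
      simp_rw [mul_pow, integral_const_mul]
      rw [integral_sq_gaussianReal_zero_one, integral_const_mul r (fun x : ℝ => x),
        integral_id_gaussianReal, hru, hh]
      simp
      rfl
    have hle : |h u - t ^ 2 - c * u| ≤ 62 * r ^ 3 * M := by
      rw [heq, ← integral_const_mul, ← Real.norm_eq_abs]
      refine norm_integral_le_of_norm_le (i3.const_mul _) (Eventually.of_forall fun x => ?_)
      refine (sigmoid_sq_taylor b (r * x)).trans (le_of_eq ?_)
      rw [abs_mul, abs_of_pos hr]
      ring
    have : (h u - t ^ 2) / u - c = (h u - t ^ 2 - c * u) / u := by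
      field_simp
    rw [this, abs_div, abs_of_pos hu, div_le_iff₀ hu]
    refine hle.trans (le_of_eq ?_)
    rw [← hru]
    ring
  rw [tendsto_iff_norm_sub_tendsto_zero]
  refine squeeze_zero' (Eventually.of_forall fun _ => norm_nonneg _)
    (eventually_nhdsWithin_of_forall fun u hu => bound u hu) ?_
  have : Tendsto (fun u : ℝ => 62 * M * Real.sqrt u) (nhds 0) (nhds (62 * M * Real.sqrt 0)) :=
    (continuous_const.mul Real.continuous_sqrt).tendsto 0
  rw [Real.sqrt_zero, mul_zero] at this
  exact this.mono_left nhdsWithin_le_nhds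
end
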